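/- There exists an absolute constant c > 0 (c = 10⁻⁵ suffices) such that the following holds. Let p : ℕ → [0,1] be a function satisfying n·p(n) − log n − log log n → ∞ and n·p(n) − log n − log log n = o(log log n) as n → ∞. Then with high probability the random graph G ~ G(n, p(n)) satisfies: for every vertex set W ⊆ V(G) with |W| ≥ 0.1·n and every graph H on vertex set W which is a subgraph of G, is a (|W|/4, 2)-expander, has at most c·n·log n edges, and contains no Hamilton cycle, some booster of H is an edge of G. -/

import Mathlib

open scoped Classical in
/-- The probability, under the binomial random graph `G(n,p)`, that a graph
property `P` holds. Each of the `n.choose 2` possible edges is present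
independently with probability `p`. -/
noncomputable def gnpProb (n : ℕ) (p : ℝ) (P : SimpleGraph (Fin n) → Prop) : ℝ :=
  ∑ G : SimpleGraph (Fin n),
    (if P G then p ^ G.edgeSet.ncard * (1 - p) ^ (n.choose 2 - G.edgeSet.ncard) else 0)

/-- The external neighbourhood of a vertex set `U`: vertices outside `U` having a
neighbour in `U`. -/
def extNbhd {V : Type*} (G : SimpleGraph V) (U : Set V) : Set V :=
  {u | u ∉ U ∧ ∃ v ∈ U, G.Adj u v}

/-- A graph is a `(k,α)`-expander if `|N(U)| ≥ α|U|` for every vertex set `U` with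
`|U| ≤ k`. -/
def IsExpander {V : Type*} (G : SimpleGraph V) (k α : ℝ) : Prop :=
  ∀ U : Set V, (U.ncard : ℝ) ≤ k → α * (U.ncard : ℝ) ≤ ((extNbhd G U).ncard : ℝ)

/-- A non-edge `e` of `G` is a booster if adding it creates a graph which is either
Hamiltonian or whose longest path is longer than that of `G`. -/
def IsBooster {V : Type*} [DecidableEq V] (G : SimpleGraph V) (e : Sym2 V) : Prop :=
  ¬e.IsDiag ∧ e ∉ G.edgeSet ∧
    ((∃ (a : V) (w : (G ⊔ SimpleGraph.fromEdgeSet {e}).Walk a a), w.IsHamiltonianCycle) ∨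
      ∃ (u v : V) (w : (G ⊔ SimpleGraph.fromEdgeSet {e}).Walk u v), w.IsPath ∧
        ∀ (a b : V) (w' : G.Walk a b), w'.IsPath → w'.length < w.length)

namespace Posa

variable {V : Type*}

/-- `b` immediately follows `a` in the list. -/
def Sc (a b : V) : List V → Prop
  | [] => False
  | x :: t => (x = a ∧ t.head? = some b) ∨ Sc a b t

theorem sc_append (a b : V) (X Y : List V) :
    Sc a b (X ++ Y) ↔ Sc a b X ∨ Sc a b Y ∨ (X.getLast? = some a ∧ Y.head? = some b) := by
  induction X with
  | nil => simp [Sc]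
  | cons x t ih =>
    cases t with
    | nil => simp [Sc]; tauto
    | cons y s =>
      simp only [List.cons_append, Sc] at ih ⊢
      simp only [List.head?_cons, List.getLast?_cons_cons] at ih ⊢
      tauto

theorem sc_reverse (a b : V) (l : List V) : Sc a b l.reverse ↔ Sc b a l := by
  induction l with
  | nil => simp [Sc]
  | cons x t ih =>
    rw [List.reverse_cons, sc_append, ih]
    simp [Sc]; tauto

theorem Sc.mem_left {a b : V} {l : List V} (h : Sc a b l) : a ∈ l := by
  induction l with
  | nil => simp [Sc] at h
  | cons x t ih =>
    rcases h with h | h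
    · simp [h.1]
    · simp [ih h]

theorem Sc.mem_right {a b : V} {l : List V} (h : Sc a b l) : b ∈ l := by
  rw [← sc_reverse] at h
  simpa using h.mem_left

theorem Sc.right_unique {a b b' : V} {l : List V} (hl : l.Nodup) (h : Sc a b l)
    (h' : Sc a b' l) : b = b' := by
  induction l with
  | nil => simp [Sc] at h
  | cons x t ih =>
    rw [List.nodup_cons] at hl
    rcases h with h | h <;> rcases h' with h' | h'
    · simpa [h.2] using h'.2
    · exact absurd h'.mem_left (h.1 ▸ hl.1)
    · exact absurd h.mem_left (h'.1 ▸ hl.1)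
    · exact ih hl.2 h h'

theorem Sc.left_unique {a a' b : V} {l : List V} (hl : l.Nodup) (h : Sc a b l)
    (h' : Sc a' b l) : a = a' := by
  rw [← sc_reverse] at h h'
  exact Sc.right_unique (List.nodup_reverse.2 hl) h h'

theorem Sc.ne_head {a b v : V} {l : List V} (hl : l.Nodup) (h : Sc a b l)
    (hv : l.head? = some v) : b ≠ v := by
  cases l with
  | nil => simp at hv
  | cons x t =>
    rw [List.nodup_cons] at hl
    simp only [List.head?_cons, Option.some.injEq] at hv
    subst hv
    rintro rfl
    rcases h with h | h
    · exact hl.1 (List.mem_of_head? h.2)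
    · exact hl.1 h.mem_right

/-- Symmetric adjacency in a list. -/
def Cs (a b : V) (l : List V) : Prop := Sc a b l ∨ Sc b a l

/-- Rotations of a path (keeping the last vertex). -/
inductive Rot (G : SimpleGraph V) (l : List V) : List V → Prop
  | refl : Rot G l l
  | step (B A : List V) (v w : V) : Rot G l (B ++ w :: A) → B.head? = some v → G.Adj v w →
      Rot G l (B.reverse ++ w :: A)

/-- End points reachable by rotations. -/
def R (G : SimpleGraph V) (l : List V) : Set V := {v | ∃ l', Rot G l l' ∧ l'.head? = some v}

theorem Rot.perm {G : SimpleGraph V} {l l' : List V} (h : Rot G l l') : l'.Perm l := by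
  induction h with
  | refl => exact List.Perm.refl _
  | step B A v w h h1 h2 ih =>
    exact ((List.reverse_perm B).append_right _).trans ih

theorem Rot.last {G : SimpleGraph V} {l l' : List V} (h : Rot G l l') :
    l'.getLast? = l.getLast? := by
  induction h with
  | refl => rfl
  | step B A v w h h1 h2 ih =>
    rw [← ih, List.getLast?_append_of_ne_nil _ (by simp), List.getLast?_append_of_ne_nil _ (by simp)]

theorem Rot.chain {G : SimpleGraph V} {l l' : List V} (h : Rot G l l')
    (hl : l.IsChain G.Adj) : l'.IsChain G.Adj := by
  induction h with
  | refl => exact hl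
  | step B A v w h h1 h2 ih =>
    rw [List.isChain_append] at ih ⊢
    refine ⟨?_, ih.2.1, ?_⟩
    · rw [List.isChain_reverse]
      exact ih.1.imp (fun a b h => h.symm)
    · intro x hx y hy
      simp only [List.getLast?_reverse, h1, List.head?_cons, Option.mem_def,
        Option.some.injEq] at hx hy
      subst hx hy
      exact h2

theorem Rot.cs {G : SimpleGraph V} {l l' : List V} (h : Rot G l l') (a : V)
    (ha : a ∉ R G l) (hn : ∀ r ∈ R G l, ¬ Cs a r l) (b : V) : Cs a b l' ↔ Cs a b l := by
  induction h generalizing b with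
  | refl => rfl
  | step B A v w h h1 h2 ih =>
    have hB : B ≠ [] := by rintro rfl; simp at h1
    obtain ⟨z, hz⟩ : ∃ z, B.getLast? = some z := ⟨_, List.getLast?_eq_some_getLast hB⟩
    have hvR : v ∈ R G l := ⟨_, h, by simp [List.head?_append, h1]⟩
    have hzR : z ∈ R G l := ⟨_, Rot.step B A v w h h1 h2, by simp [List.head?_append, hz]⟩
    have hav : a ≠ v := by rintro rfl; exact ha hvR
    have haz : a ≠ z := by rintro rfl; exact ha hzR
    have haw : a ≠ w := by
      rintro rfl
      refine hn z hzR ((ih z).1 (Or.inr ?_))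
      rw [sc_append]
      exact Or.inr (Or.inr ⟨hz, rfl⟩)
    rw [← ih b]
    unfold Cs
    simp only [sc_append, sc_reverse, List.getLast?_reverse, h1, hz, List.head?_cons,
      Option.some.injEq]
    have := hav.symm; have := haz.symm; have := haw.symm
    tauto

/-- `l` is a longest path (as a list of vertices). -/
def MaxP (G : SimpleGraph V) (l : List V) : Prop :=
  l.IsChain G.Adj ∧ l.Nodup ∧ ∀ l' : List V, l'.IsChain G.Adj → l'.Nodup → l'.length ≤ l.length

theorem Rot.maxP {G : SimpleGraph V} {l l' : List V} (h : Rot G l l') (hl : MaxP G l) :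
    MaxP G l' :=
  ⟨h.chain hl.1, h.perm.nodup_iff.2 hl.2.1, fun m h1 h2 => by
    rw [h.perm.length_eq]; exact hl.2.2 m h1 h2⟩

theorem MaxP.reverse {G : SimpleGraph V} {l : List V} (hl : MaxP G l) : MaxP G l.reverse :=
  ⟨by rw [List.isChain_reverse]; exact hl.1.imp (fun a b h => h.symm),
    List.nodup_reverse.2 hl.2.1, fun m h1 h2 => by simpa using hl.2.2 m h1 h2⟩

theorem posa_nbhd {G : SimpleGraph V} {l : List V} (hl : MaxP G l) (w : V)
    (hw : w ∈ extNbhd G (R G l)) : ∃ r ∈ R G l, Cs w r l := by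
  obtain ⟨hwR, v, ⟨l', hl', hv⟩, hadj⟩ := hw
  by_contra hcon
  push Not at hcon
  have hm := hl'.maxP hl
  have hwl : w ∈ l' := by
    by_contra hwl
    have := hm.2.2 (w :: l') (by
      rw [List.isChain_cons]
      refine ⟨fun y hy => ?_, hm.1⟩
      rw [hv] at hy
      simp only [Option.mem_def, Option.some.injEq] at hy
      exact hy ▸ hadj) (List.nodup_cons.2 ⟨hwl, hm.2.1⟩)
    simp at this
  obtain ⟨B, A, rfl⟩ := List.append_of_mem hwl
  have hwv : w ≠ v := hadj.ne
  have hB : B ≠ [] := by rintro rfl; simp at hv; exact hwv hv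
  have hBv : B.head? = some v := by
    rw [List.head?_append_of_ne_nil _ hB] at hv; exact hv
  obtain ⟨z, hz⟩ : ∃ z, B.getLast? = some z := ⟨_, List.getLast?_eq_some_getLast hB⟩
  have hzR : z ∈ R G l :=
    ⟨_, Rot.step B A v w hl' hBv hadj.symm, by simp [List.head?_append, hz]⟩
  refine hcon z hzR ((hl'.cs w hwR hcon z).1 (Or.inr ?_))
  rw [sc_append]
  exact Or.inr (Or.inr ⟨hz, rfl⟩)

theorem R_card [Finite V] {G : SimpleGraph V} {l : List V} (hl : MaxP G l) (hne : l ≠ []) :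
    (extNbhd G (R G l)).ncard + 1 ≤ 2 * (R G l).ncard := by
  obtain ⟨v, hv⟩ : ∃ v, l.head? = some v := ⟨_, List.head?_eq_some_head hne⟩
  have hvR : v ∈ R G l := ⟨l, Rot.refl, hv⟩
  let N1 : Set V := {w | ∃ r ∈ R G l, Sc r w l}
  let N2 : Set V := {w | ∃ r ∈ R G l, Sc w r l}
  have h0 : extNbhd G (R G l) ⊆ N1 ∪ N2 := by
    intro w hw
    obtain ⟨r, hr, h | h⟩ := posa_nbhd hl w hw
    · exact Or.inr ⟨r, hr, h⟩
    · exact Or.inl ⟨r, hr, h⟩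
  have h1 : N1.ncard ≤ (R G l).ncard := by
    have : ∀ w : V, ∃ r, w ∈ N1 → (r ∈ R G l ∧ Sc r w l) := fun w => by
      by_cases h : w ∈ N1
      · obtain ⟨r, h⟩ := h; exact ⟨r, fun _ => h⟩
      · exact ⟨w, fun h' => absurd h' h⟩
    choose f hf using this
    refine Set.ncard_le_ncard_of_injOn f (fun w hw => (hf w hw).1) ?_ (Set.toFinite _)
    intro w hw w' hw' h
    have a := (hf w hw).2
    have b := (hf w' hw').2
    rw [← h] at b
    exact a.right_unique hl.2.1 b
  have h2 : N2.ncard ≤ (R G l \ {v}).ncard := by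
    have : ∀ w : V, ∃ r, w ∈ N2 → (r ∈ R G l ∧ Sc w r l) := fun w => by
      by_cases h : w ∈ N2
      · obtain ⟨r, h⟩ := h; exact ⟨r, fun _ => h⟩
      · exact ⟨w, fun h' => absurd h' h⟩
    choose f hf using this
    refine Set.ncard_le_ncard_of_injOn f
      (fun w hw => ⟨(hf w hw).1, (hf w hw).2.ne_head hl.2.1 hv⟩) ?_ (Set.toFinite _)
    intro w hw w' hw' h
    have a := (hf w hw).2
    have b := (hf w' hw').2
    rw [← h] at b
    exact a.left_unique hl.2.1 b
  have h3 := Set.ncard_sdiff_singleton_add_one hvR (Set.toFinite _)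
  have h4 := Set.ncard_le_ncard h0 (Set.toFinite _)
  have h5 := Set.ncard_union_le N1 N2
  omega

theorem R_large [Finite V] {G : SimpleGraph V} {k : ℝ} (hG : IsExpander G k 2) {l : List V}
    (hl : MaxP G l) (hne : l ≠ []) : k < ((R G l).ncard : ℝ) := by
  by_contra h
  have h1 := hG (R G l) (not_lt.1 h)
  have h2 := R_card hl hne
  have h3 : ((extNbhd G (R G l)).ncard : ℝ) + 1 ≤ 2 * ((R G l).ncard : ℝ) := by exact_mod_cast h2
  linarith

theorem close_path [Fintype V] [DecidableEq V] {G G' : SimpleGraph V} (hle : G ≤ G')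
    (hconn : ∀ S : Set V, S.Nonempty → S ≠ Set.univ → (extNbhd G S).Nonempty)
    {l : List V} (hc : l.IsChain G'.Adj) (hn : l.Nodup) (h3 : 3 ≤ l.length) {a b : V}
    (hb : l.head? = some b) (ha : l.getLast? = some a) (hab : G'.Adj a b) :
    (∃ (x : V) (w : G'.Walk x x), w.IsHamiltonianCycle) ∨
      ∃ l' : List V, l'.IsChain G'.Adj ∧ l'.Nodup ∧ l.length < l'.length := by
  have hne : l ≠ [] := by rintro rfl; simp at h3
  by_cases hall : {v | v ∈ l} = Set.univ
  · left
    have e1 : l.head hne = b := by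
      rw [List.head?_eq_some_head hne] at hb; simpa using hb
    have e2 : l.getLast hne = a := by
      rw [List.getLast?_eq_some_getLast hne] at ha; simpa using ha
    let w := SimpleGraph.Walk.ofSupport l hne hc
    have hw : w.IsPath := by
      rw [SimpleGraph.Walk.isPath_def]; simpa [w] using hn
    have hlen : w.length = l.length - 1 := by simp [w]
    have hadj : G'.Adj (l.getLast hne) (l.head hne) := by rw [e1, e2]; exact hab
    refine ⟨_, SimpleGraph.Walk.cons hadj w, ?_⟩
    rw [SimpleGraph.Walk.isHamiltonianCycle_iff_isCycle_and_length_eq]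
    constructor
    · rw [SimpleGraph.Walk.cons_isCycle_iff]
      refine ⟨hw, fun hmem => ?_⟩
      rw [Sym2.eq_swap] at hmem
      have := hw.length_eq_one_of_mem_edges hmem
      omega
    · have : l.length = Fintype.card V := by
        rw [← List.toFinset_card_of_nodup hn, ← Finset.card_univ]
        congr 1
        ext v
        have : v ∈ {v | v ∈ l} := by rw [hall]; trivial
        simpa using this
      simp [hlen]
      omega
  · right
    obtain ⟨w, hwl, x, hx, hadj⟩ := hconn {v | v ∈ l} ⟨b, List.mem_of_head? hb⟩ hall
    obtain ⟨A, B, rfl⟩ := List.append_of_mem (show x ∈ l from hx)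
    refine ⟨w :: ((x :: B) ++ A), ?_, ?_, ?_⟩
    · rw [List.isChain_cons]
      refine ⟨?_, ?_⟩
      · intro y hy
        simp at hy
        exact hy ▸ hle hadj
      · rw [List.isChain_append] at hc ⊢
        refine ⟨hc.2.1, hc.1, ?_⟩
        intro y hy z hz
        rw [List.getLast?_append_of_ne_nil _ (by simp)] at ha
        rw [List.head?_append] at hb
        rw [Option.mem_def] at hy hz
        rw [hz] at hb
        rw [hy] at ha
        simp at ha hb
        rw [ha, hb]; exact hab
    · rw [List.nodup_cons]
      refine ⟨?_, ?_⟩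
      · intro h
        apply hwl
        simp at h ⊢
        tauto
      · exact (List.perm_append_comm.nodup_iff).1 hn
    · simp; omega

theorem closed_large [Fintype V] {G : SimpleGraph V}
    (hG : IsExpander G ((Fintype.card V : ℝ) / 4) 2) (hV : 8 ≤ Fintype.card V)
    (S : Set V) (hS : S.Nonempty) (hE : extNbhd G S = ∅) : Fintype.card V < 2 * S.ncard := by
  set q := Fintype.card V / 4 with hq
  have hq4 : (q : ℝ) ≤ (Fintype.card V : ℝ) / 4 := by
    have : q * 4 ≤ Fintype.card V := Nat.div_mul_le_self _ _
    have : (q : ℝ) * 4 ≤ (Fintype.card V : ℝ) := by exact_mod_cast this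
    linarith
  have hpos : 0 < S.ncard := (Set.ncard_pos (Set.toFinite _)).2 hS
  rcases le_or_gt S.ncard q with h | h
  · have h1 := hG S (le_trans (by exact_mod_cast h) hq4)
    rw [hE] at h1
    simp at h1
    have : (0 : ℝ) < S.ncard := by exact_mod_cast hpos
    linarith
  · obtain ⟨U, hUS, hU⟩ := Set.exists_subset_card_eq (s := S) (n := q) h.le
    have h1 := hG U (by rw [hU]; exact hq4)
    have h2 : U ∪ extNbhd G U ⊆ S := by
      rintro x (hx | ⟨hx, v, hv, hadj⟩)
      · exact hUS hx
      · by_contra hxS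
        have : x ∈ extNbhd G S := ⟨hxS, v, hUS hv, hadj⟩
        rw [hE] at this
        exact this
    have h3 := Set.ncard_le_ncard h2 (Set.toFinite _)
    rw [Set.ncard_union_eq (Set.disjoint_left.2 fun x hx hx' => hx'.1 hx) (Set.toFinite _)
      (Set.toFinite _)] at h3
    have h4 : 2 * U.ncard ≤ (extNbhd G U).ncard := by exact_mod_cast h1
    omega

theorem conn_of_expander [Fintype V] {G : SimpleGraph V}
    (hG : IsExpander G ((Fintype.card V : ℝ) / 4) 2) (hV : 8 ≤ Fintype.card V)
    (S : Set V) (hS : S.Nonempty) (hS' : S ≠ Set.univ) : (extNbhd G S).Nonempty := by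
  by_contra hcon
  rw [Set.not_nonempty_iff_eq_empty] at hcon
  have h1 := closed_large hG hV S hS hcon
  have hcon' : extNbhd G Sᶜ = ∅ := by
    rw [Set.eq_empty_iff_forall_notMem]
    rintro x ⟨hx, v, hv, hadj⟩
    have : v ∈ extNbhd G S := ⟨hv, x, not_not.1 hx, hadj.symm⟩
    rw [hcon] at this
    exact this
  have h2 := closed_large hG hV Sᶜ (Set.nonempty_compl.2 hS') hcon'
  have h3 := Set.ncard_add_ncard_compl S
  rw [Nat.card_eq_fintype_card] at h3
  omega

theorem exists_maxP [Fintype V] [Nonempty V] (G : SimpleGraph V) : ∃ l, MaxP G l := by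
  classical
  let Q : ℕ → Prop := fun k => ∃ l : List V, l.IsChain G.Adj ∧ l.Nodup ∧ l.length = k
  have h0 : Q 0 := ⟨[], by simp, by simp, rfl⟩
  obtain ⟨l, h1, h2, h3⟩ := Nat.findGreatest_spec (P := Q) (Nat.zero_le (Fintype.card V)) h0
  refine ⟨l, h1, h2, fun l' h1' h2' => ?_⟩
  rw [h3]
  exact Nat.le_findGreatest h2'.length_le_card ⟨l', h1', h2', rfl⟩

theorem maxP_len [Fintype V] [Nonempty V] {G : SimpleGraph V}
    (hG : IsExpander G ((Fintype.card V : ℝ) / 4) 2) (hV : 8 ≤ Fintype.card V)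
    {l : List V} (hl : MaxP G l) : 3 ≤ l.length := by
  obtain ⟨v⟩ := ‹Nonempty V›
  have h1 := hG {v} (by
    have : (8 : ℝ) ≤ Fintype.card V := by exact_mod_cast hV
    rw [Set.ncard_singleton]; push_cast; linarith)
  have h2 : 1 < (extNbhd G {v}).ncard := by
    rw [Set.ncard_singleton] at h1
    have : 2 * 1 ≤ (extNbhd G {v}).ncard := by exact_mod_cast h1
    omega
  obtain ⟨x, y, hx, hy, hxy⟩ := (Set.one_lt_ncard_iff (Set.toFinite _)).1 h2
  obtain ⟨hxv, x', hx', hax⟩ := hx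
  obtain ⟨hyv, y', hy', hay⟩ := hy
  simp only [Set.mem_singleton_iff] at hx' hy' hxv hyv
  subst hx'; subst hy'
  have := hl.2.2 [x, y', y] (by simp [hax, hay.symm]) (by
    simp [hxv, hxy]; exact fun h => hyv h.symm)
  simpa using this

theorem booster_of_maxP [Fintype V] [DecidableEq V] {G : SimpleGraph V}
    (hconn : ∀ S : Set V, S.Nonempty → S ≠ Set.univ → (extNbhd G S).Nonempty)
    (hH : ¬ ∃ (a : V) (w : G.Walk a a), w.IsHamiltonianCycle)
    {l : List V} (hl : MaxP G l) (h3 : 3 ≤ l.length) {a b : V}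
    (hb : l.head? = some b) (ha : l.getLast? = some a) : IsBooster G s(a, b) := by
  have hab : a ≠ b := by
    rintro rfl
    cases l with
    | nil => simp at h3
    | cons x t =>
      cases t with
      | nil => simp at h3
      | cons y s =>
        rw [List.getLast?_cons_cons] at ha
        simp only [List.head?_cons, Option.some.injEq] at hb
        subst hb
        exact (List.nodup_cons.1 hl.2.1).1 (List.mem_of_getLast? ha)
  have hnadj : ¬ G.Adj a b := by
    intro h
    rcases close_path le_rfl hconn hl.1 hl.2.1 h3 hb ha h with h | ⟨l', h1, h2, h4⟩
    · exact hH h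
    · exact absurd (hl.2.2 l' h1 h2) (not_le.2 h4)
  refine ⟨by simpa using hab, by simpa using hnadj, ?_⟩
  have hle : G ≤ G ⊔ SimpleGraph.fromEdgeSet {s(a, b)} := le_sup_left
  rcases close_path hle hconn (hl.1.imp fun _ _ h => hle h) hl.2.1 h3 hb ha
    (by simp [hab]) with h | ⟨l', h1, h2, h4⟩
  · exact Or.inl h
  · right
    have hne : l' ≠ [] := by rintro rfl; simp at h4
    refine ⟨_, _, SimpleGraph.Walk.ofSupport l' hne h1, ?_, ?_⟩
    · rw [SimpleGraph.Walk.isPath_def]; simpa using h2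
    · intro x y w hw
      have := hl.2.2 w.support w.isChain_adj_support hw.support_nodup
      rw [SimpleGraph.Walk.length_support] at this
      rw [SimpleGraph.Walk.length_ofSupport]
      omega

theorem many_boosters [Fintype V] [DecidableEq V] {G : SimpleGraph V}
    (hG : IsExpander G ((Fintype.card V : ℝ) / 4) 2) (hV : 8 ≤ Fintype.card V)
    (hH : ¬ ∃ (a : V) (w : G.Walk a a), w.IsHamiltonianCycle) :
    (Fintype.card V : ℝ) ^ 2 / 32 ≤ ({e | IsBooster G e}.ncard : ℝ) := by
  classical
  have : Nonempty V := Fintype.card_pos_iff.1 (by omega)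
  have hconn := conn_of_expander hG hV
  obtain ⟨l, hl⟩ := exists_maxP G
  have hne : ∀ l', MaxP G l' → l' ≠ [] := by
    rintro l' h rfl
    have := maxP_len hG hV h
    simp at this
  let T : SimpleGraph V := SimpleGraph.fromEdgeSet {e | IsBooster G e}
  have hT : T.edgeFinset.card = {e | IsBooster G e}.ncard := by
    rw [← Set.ncard_coe_finset, SimpleGraph.coe_edgeFinset]
    congr 1
    simp only [T, SimpleGraph.edgeSet_fromEdgeSet]
    ext e
    simp only [Set.mem_sdiff, Set.mem_ofPred_eq, and_iff_left_iff_imp]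
    exact fun h => h.1
  have hdeg : ∀ a ∈ R G l, (Fintype.card V : ℝ) / 4 ≤ T.degree a := by
    rintro a ⟨l', hl', ha⟩
    have hm := (hl'.maxP hl).reverse
    have h1 := R_large hG hm (hne _ hm)
    refine h1.le.trans ?_
    have : (R G l'.reverse) ⊆ (T.neighborFinset a : Set V) := by
      rintro b ⟨l'', hl'', hb⟩
      have hbo := booster_of_maxP hconn hH (hl''.maxP hm) (maxP_len hG hV (hl''.maxP hm)) hb
        (a := a) (by rw [hl''.last]; simpa using ha)
      simp only [SimpleGraph.coe_neighborFinset, SimpleGraph.mem_neighborSet, T,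
        SimpleGraph.fromEdgeSet_adj]
      exact ⟨hbo, by simpa using hbo.1⟩
    have h2 := Set.ncard_le_ncard this (Set.toFinite _)
    rw [Set.ncard_coe_finset, SimpleGraph.card_neighborFinset_eq_degree] at h2
    exact_mod_cast h2
  have h1 := R_large hG hl (hne _ hl)
  have hsum := T.sum_degrees_eq_twice_card_edges
  have h5 : ((R G l).toFinset.card : ℝ) * ((Fintype.card V : ℝ) / 4) ≤ ∑ v, (T.degree v : ℝ) := by
    calc _ = ∑ v ∈ (R G l).toFinset, ((Fintype.card V : ℝ) / 4) := by simp
      _ ≤ ∑ v ∈ (R G l).toFinset, (T.degree v : ℝ) :=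
        Finset.sum_le_sum fun v hv => hdeg v (by simpa using hv)
      _ ≤ _ := Finset.sum_le_sum_of_subset_of_nonneg (Finset.subset_univ _)
        (fun _ _ _ => by positivity)
  have h6 : ∑ v, (T.degree v : ℝ) = 2 * ({e | IsBooster G e}.ncard : ℝ) := by
    rw [← hT]; norm_cast; convert hsum
  rw [← Set.ncard_eq_toFinset_card'] at h5
  have h7 : (0 : ℝ) ≤ (Fintype.card V : ℝ) / 4 := by positivity
  nlinarith [mul_le_mul_of_nonneg_right h1.le h7]

end Posa

namespace GnpAux

open Finset

variable {n : ℕ}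

open scoped Classical in
theorem sum_graph (φ : Finset (Sym2 (Fin n)) → ℝ) :
    ∑ G : SimpleGraph (Fin n), φ G.edgeFinset =
      ∑ A ∈ (⊤ : SimpleGraph (Fin n)).edgeFinset.powerset, φ A := by
  refine Finset.sum_bij (fun G _ => G.edgeFinset) ?_ ?_ ?_ ?_
  · intro G _
    rw [mem_powerset]
    exact SimpleGraph.edgeFinset_mono le_top
  · intro G _ G' _ h
    exact SimpleGraph.edgeFinset_inj.1 h
  · intro A hA
    refine ⟨SimpleGraph.fromEdgeSet (A : Set (Sym2 (Fin n))), mem_univ _, ?_⟩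
    rw [mem_powerset] at hA
    ext e
    simp only [SimpleGraph.mem_edgeFinset, SimpleGraph.edgeSet_fromEdgeSet, Set.mem_sdiff,
      mem_coe]
    constructor
    · exact fun h => h.1
    · intro h
      refine ⟨h, ?_⟩
      have := hA h
      rw [SimpleGraph.mem_edgeFinset] at this
      exact SimpleGraph.not_isDiag_of_mem_edgeSet _ this
  · intro G _
    rfl

theorem card_top : (⊤ : SimpleGraph (Fin n)).edgeFinset.card = n.choose 2 := by
  rw [SimpleGraph.card_edgeFinset_top_eq_card_choose_two, Fintype.card_fin]

/-- weight of a graph -/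
noncomputable def wt (p : ℝ) (G : SimpleGraph (Fin n)) : ℝ :=
  p ^ G.edgeSet.ncard * (1 - p) ^ (n.choose 2 - G.edgeSet.ncard)

theorem wt_nonneg {p : ℝ} (h0 : 0 ≤ p) (h1 : p ≤ 1) (G : SimpleGraph (Fin n)) : 0 ≤ wt p G :=
  mul_nonneg (pow_nonneg h0 _) (pow_nonneg (by linarith) _)

open scoped Classical in
theorem ncard_eq (G : SimpleGraph (Fin n)) : G.edgeSet.ncard = G.edgeFinset.card := by
  rw [← Set.ncard_coe_finset, SimpleGraph.coe_edgeFinset]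

theorem sum_wt (p : ℝ) : ∑ G : SimpleGraph (Fin n), wt p G = 1 := by
  classical
  have := sum_graph (n := n) (fun A => p ^ A.card * (1 - p) ^ (n.choose 2 - A.card))
  unfold wt
  simp_rw [ncard_eq]
  rw [this, ← card_top (n := n), Finset.sum_pow_mul_eq_add_pow]
  simp

open scoped Classical in
theorem sum_wt_le {p : ℝ} (h0 : 0 ≤ p) (h1 : p ≤ 1) (E B : Finset (Sym2 (Fin n)))
    (hE : E ⊆ (⊤ : SimpleGraph (Fin n)).edgeFinset)
    (hB : B ⊆ (⊤ : SimpleGraph (Fin n)).edgeFinset) (hd : Disjoint E B) :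
    ∑ G : SimpleGraph (Fin n), (if E ⊆ G.edgeFinset ∧ Disjoint B G.edgeFinset then wt p G else 0)
      ≤ p ^ E.card * (1 - p) ^ B.card := by
  set S := (⊤ : SimpleGraph (Fin n)).edgeFinset with hS
  have hq : 0 ≤ 1 - p := by linarith
  have key := Finset.prod_add (fun i => if i ∈ B then 0 else p)
    (fun i => if i ∈ E then 0 else 1 - p) S
  have lhs : ∏ i ∈ S, ((if i ∈ B then 0 else p) + (if i ∈ E then 0 else 1 - p)) =
      p ^ E.card * (1 - p) ^ B.card := by
    have : ∀ i ∈ S, ((if i ∈ B then 0 else p) + (if i ∈ E then 0 else 1 - p)) =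
        (if i ∈ E then p else 1) * (if i ∈ B then 1 - p else 1) := by
      intro i _
      by_cases hiE : i ∈ E
      · have : i ∉ B := Finset.disjoint_left.1 hd hiE
        simp [hiE, this]
      · by_cases hiB : i ∈ B <;> simp [hiE, hiB]
    rw [Finset.prod_congr rfl this, Finset.prod_mul_distrib, Finset.prod_ite_mem,
      Finset.prod_ite_mem, Finset.inter_eq_right.2 hE, Finset.inter_eq_right.2 hB]
    simp
  rw [← lhs, key, ← sum_graph (n := n)
    (fun t => (∏ i ∈ t, if i ∈ B then 0 else p) * ∏ i ∈ S \ t, if i ∈ E then 0 else 1 - p)]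
  refine Finset.sum_le_sum fun G _ => ?_
  split_ifs with h
  · apply le_of_eq
    unfold wt
    rw [ncard_eq]
    congr 1
    · rw [Finset.prod_congr rfl (g := fun _ => p), Finset.prod_const]
      intro i hi
      rw [if_neg (fun hiB => Finset.disjoint_left.1 h.2 hiB hi)]
    · rw [Finset.prod_congr rfl (g := fun _ => 1 - p), Finset.prod_const]
      · rw [Finset.card_sdiff_of_subset (SimpleGraph.edgeFinset_mono le_top), ← card_top (n := n)]
      · intro i hi
        rw [if_neg (fun hiE => (Finset.mem_sdiff.1 hi).2 (h.1 hiE))]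
  · refine mul_nonneg (Finset.prod_nonneg fun i _ => ?_) (Finset.prod_nonneg fun i _ => ?_) <;>
    split_ifs <;> first | exact le_rfl | assumption

theorem sum_small {p K M : ℝ} (h0 : 0 ≤ p) (hK : 1 ≤ K) :
    (∑ F : SimpleGraph (Fin n) with (F.edgeSet.ncard : ℝ) ≤ M, p ^ F.edgeSet.ncard) ≤
      K ^ M * Real.exp (p / K * n ^ 2 / 2) := by
  classical
  have hK0 : 0 < K := by linarith
  calc (∑ F : SimpleGraph (Fin n) with (F.edgeSet.ncard : ℝ) ≤ M, p ^ F.edgeSet.ncard)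
      ≤ ∑ F : SimpleGraph (Fin n) with (F.edgeSet.ncard : ℝ) ≤ M,
          K ^ M * (p / K) ^ F.edgeSet.ncard := by
        refine Finset.sum_le_sum fun F hF => ?_
        simp only [mem_filter, mem_univ, true_and] at hF
        rw [div_pow, ← Real.rpow_natCast K]
        have h2 : K ^ (F.edgeSet.ncard : ℝ) ≤ K ^ M := Real.rpow_le_rpow_of_exponent_le hK hF
        have h3 : 0 < K ^ (F.edgeSet.ncard : ℝ) := Real.rpow_pos_of_pos hK0 _
        rw [mul_div_assoc', le_div_iff₀ h3, mul_comm]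
        exact mul_le_mul_of_nonneg_right h2 (pow_nonneg h0 _)
    _ ≤ ∑ F : SimpleGraph (Fin n), K ^ M * (p / K) ^ F.edgeSet.ncard :=
        Finset.sum_le_sum_of_subset_of_nonneg (Finset.subset_univ _)
          (fun _ _ _ => by positivity)
    _ = K ^ M * (1 + p / K) ^ (n.choose 2) := by
        rw [← Finset.mul_sum]
        congr 1
        simp_rw [ncard_eq]
        rw [sum_graph (n := n) (fun A => (p / K) ^ A.card), ← card_top (n := n), add_comm,
          ← Finset.sum_pow_mul_eq_add_pow]
        simp
    _ ≤ _ := by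
        refine mul_le_mul_of_nonneg_left ?_ (by positivity)
        have h4 : (1 + p / K) ≤ Real.exp (p / K) := by
          rw [add_comm]; exact Real.add_one_le_exp _
        have h5 : ((n.choose 2 : ℕ) : ℝ) ≤ (n : ℝ) ^ 2 / 2 := by
          rw [Nat.cast_choose_two]
          nlinarith [(Nat.cast_nonneg n : (0 : ℝ) ≤ n)]
        calc (1 + p / K) ^ (n.choose 2) ≤ (Real.exp (p / K)) ^ (n.choose 2) :=
              pow_le_pow_left₀ (by positivity) h4 _
          _ = Real.exp ((n.choose 2 : ℕ) * (p / K)) := by rw [Real.exp_nat_mul]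
          _ ≤ _ := by
              apply Real.exp_le_exp.2
              have : 0 ≤ p / K := by positivity
              nlinarith

/-- Boosters of the graph induced on `X`, as pairs in `Fin n`. -/
def bst (X : Finset (Fin n)) (F : SimpleGraph (Fin n)) : Set (Sym2 (Fin n)) :=
  Sym2.map Subtype.val '' {e | IsBooster (F.induce (X : Set (Fin n))) e}

open scoped Classical in
theorem bad_le {p : ℝ} (h0 : 0 ≤ p) (h1 : p ≤ 1) (P : SimpleGraph (Fin n) → Prop)
    (M Bd : ℝ)
    (hP : ∀ G, ¬ P G → ∃ (X : Finset (Fin n)) (F : SimpleGraph (Fin n)), F ≤ G ∧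
      (F.edgeSet.ncard : ℝ) ≤ M ∧ Bd ≤ ((bst X F).ncard : ℝ) ∧ Disjoint (bst X F) G.edgeSet) :
    1 - 2 ^ n * Real.exp (-p * Bd) * (3200 ^ M * Real.exp (p / 3200 * n ^ 2 / 2))
      ≤ gnpProb n p P := by
  have hg : gnpProb n p P = ∑ G : SimpleGraph (Fin n), if P G then wt p G else 0 := rfl
  rw [hg]
  let Q : Finset (Fin n) → SimpleGraph (Fin n) → Prop := fun X F =>
    (F.edgeSet.ncard : ℝ) ≤ M ∧ Bd ≤ ((bst X F).ncard : ℝ)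
  have hterm : ∀ G : SimpleGraph (Fin n), wt p G ≤ (if P G then wt p G else 0) +
      ∑ X : Finset (Fin n), ∑ F : SimpleGraph (Fin n) with Q X F,
        (if F.edgeFinset ⊆ G.edgeFinset ∧ Disjoint (bst X F).toFinset G.edgeFinset
          then wt p G else 0) := by
    intro G
    have hw := wt_nonneg h0 h1 G
    have hnn : ∀ X : Finset (Fin n), ∀ F : SimpleGraph (Fin n),
        0 ≤ (if F.edgeFinset ⊆ G.edgeFinset ∧ Disjoint (bst X F).toFinset G.edgeFinset
          then wt p G else 0) := fun X F => by split_ifs <;> simp [hw]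
    by_cases hPG : P G
    · rw [if_pos hPG]
      have : 0 ≤ ∑ X : Finset (Fin n), ∑ F : SimpleGraph (Fin n) with Q X F,
        (if F.edgeFinset ⊆ G.edgeFinset ∧ Disjoint (bst X F).toFinset G.edgeFinset
          then wt p G else 0) := Finset.sum_nonneg fun X _ => Finset.sum_nonneg fun F _ => hnn X F
      linarith
    · rw [if_neg hPG, zero_add]
      obtain ⟨X, F, hFG, hM, hBd, hdis⟩ := hP G hPG
      have e1 : wt p G = (if F.edgeFinset ⊆ G.edgeFinset ∧
          Disjoint (bst X F).toFinset G.edgeFinset then wt p G else 0) := by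
        rw [if_pos]
        refine ⟨SimpleGraph.edgeFinset_mono hFG, ?_⟩
        rw [← Finset.disjoint_coe]
        simpa using hdis
      conv_lhs => rw [e1]
      refine le_trans ?_ (Finset.single_le_sum (f := fun X => ∑ F : SimpleGraph (Fin n) with Q X F,
        (if F.edgeFinset ⊆ G.edgeFinset ∧ Disjoint (bst X F).toFinset G.edgeFinset
          then wt p G else 0)) (fun X _ => Finset.sum_nonneg fun F _ => hnn X F) (mem_univ X))
      exact Finset.single_le_sum (f := fun F =>
        (if F.edgeFinset ⊆ G.edgeFinset ∧ Disjoint (bst X F).toFinset G.edgeFinset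
          then wt p G else 0)) (fun F _ => hnn X F)
        (show F ∈ univ.filter (Q X) from mem_filter.2 ⟨mem_univ F, hM, hBd⟩)
  have hsum := Finset.sum_le_sum (s := univ) fun G _ => hterm G
  rw [sum_wt, Finset.sum_add_distrib] at hsum
  rw [sub_le_iff_le_add]
  refine hsum.trans (add_le_add le_rfl ?_)
  rw [Finset.sum_comm]
  have hX : ∀ X : Finset (Fin n), ∑ G : SimpleGraph (Fin n),
      ∑ F : SimpleGraph (Fin n) with Q X F,
        (if F.edgeFinset ⊆ G.edgeFinset ∧ Disjoint (bst X F).toFinset G.edgeFinset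
          then wt p G else 0) ≤
      Real.exp (-p * Bd) * (3200 ^ M * Real.exp (p / 3200 * n ^ 2 / 2)) := by
    intro X
    rw [Finset.sum_comm]
    calc _ ≤ ∑ F : SimpleGraph (Fin n) with Q X F,
          p ^ F.edgeSet.ncard * Real.exp (-p * Bd) := by
            refine Finset.sum_le_sum fun F hF => ?_
            simp only [mem_filter, mem_univ, true_and, Q] at hF
            refine (sum_wt_le h0 h1 F.edgeFinset (bst X F).toFinset
              (SimpleGraph.edgeFinset_mono le_top) ?_ ?_).trans ?_
            · intro e he
              rw [Set.mem_toFinset] at he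
              obtain ⟨e, he, rfl⟩ := he
              have := he.1
              induction e with
              | h x y => simpa [Subtype.val_inj] using this
            · rw [Finset.disjoint_left]
              intro e he he'
              rw [Set.mem_toFinset] at he'
              obtain ⟨e, he', rfl⟩ := he'
              have := he'.2.1
              induction e with
              | h x y =>
                apply this
                simpa using he
            · rw [← ncard_eq, ← Set.ncard_eq_toFinset_card']
              refine mul_le_mul_of_nonneg_left ?_ (pow_nonneg h0 _)
              calc (1 - p) ^ (bst X F).ncard ≤ (Real.exp (-p)) ^ (bst X F).ncard :=
                    pow_le_pow_left₀ (by linarith) (Real.one_sub_le_exp_neg p) _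
                _ = Real.exp ((bst X F).ncard * (-p)) := by rw [Real.exp_nat_mul]
                _ ≤ _ := by
                  apply Real.exp_le_exp.2
                  nlinarith [hF.2]
      _ ≤ ∑ F : SimpleGraph (Fin n) with (F.edgeSet.ncard : ℝ) ≤ M,
          p ^ F.edgeSet.ncard * Real.exp (-p * Bd) := by
            refine Finset.sum_le_sum_of_subset_of_nonneg ?_ (fun _ _ _ => by positivity)
            intro F hF
            simp only [mem_filter, mem_univ, true_and, Q] at hF ⊢
            exact hF.1
      _ ≤ _ := by
        rw [← Finset.sum_mul, mul_comm]
        exact mul_le_mul_of_nonneg_left (sum_small h0 (by norm_num)) (Real.exp_pos _).le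
  refine (Finset.sum_le_sum fun X _ => hX X).trans (le_of_eq ?_)
  rw [Finset.sum_const, Finset.card_univ, Fintype.card_finset, Fintype.card_fin, nsmul_eq_mul]
  push_cast
  ring

theorem bst_eq (X : Finset (Fin n)) (F : SimpleGraph (Fin n)) (Y : Set (Fin n)) (h : Y = ↑X) :
    bst X F = Sym2.map Subtype.val '' {e | IsBooster (F.induce Y) e} := by
  subst h; rfl

theorem event_aux {M : ℝ} (hn : 80 ≤ n) (G : SimpleGraph (Fin n))
    (W : Finset (Fin n)) (hW : (0.1 : ℝ) * n ≤ (W.card : ℝ)) (H : G.Subgraph)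
    (hHW : H.verts = ↑W) (hexp : IsExpander H.coe ((W.card : ℝ) / 4) 2)
    (hM : (H.coe.edgeSet.ncard : ℝ) ≤ M)
    (hham : ¬∃ (a : H.verts) (w : H.coe.Walk a a), w.IsHamiltonianCycle)
    (hno : ¬ ∃ e : Sym2 H.verts, IsBooster H.coe e ∧ e.map Subtype.val ∈ G.edgeSet) :
    ∃ (X : Finset (Fin n)) (F : SimpleGraph (Fin n)), F ≤ G ∧
      (F.edgeSet.ncard : ℝ) ≤ M ∧ (n : ℝ) ^ 2 / 3200 ≤ ((bst X F).ncard : ℝ) ∧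
      Disjoint (bst X F) G.edgeSet := by
  have hcoe : H.spanningCoe.induce H.verts = H.coe := by
    ext x y; simp
  have hb : bst W H.spanningCoe = Sym2.map Subtype.val '' {e | IsBooster H.coe e} := by
    rw [bst_eq W _ _ hHW, hcoe]
  refine ⟨W, H.spanningCoe, H.spanningCoe_le, ?_, ?_, ?_⟩
  · refine le_trans ?_ hM
    rw [SimpleGraph.Subgraph.edgeSet_spanningCoe, ← SimpleGraph.Subgraph.image_coe_edgeSet_coe]
    exact_mod_cast Set.ncard_image_le (Set.toFinite _)
  · have : Fintype H.verts := Fintype.ofFinite _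
    have hcard : Fintype.card H.verts = W.card := by
      rw [← Nat.card_eq_fintype_card, Nat.card_coe_set_eq, hHW, Set.ncard_coe_finset]
    have hn' : (80 : ℝ) ≤ n := by exact_mod_cast hn
    have h8 : 8 ≤ Fintype.card H.verts := by
      rw [hcard]
      have : (8 : ℝ) ≤ W.card := by linarith
      exact_mod_cast this
    have := Posa.many_boosters (G := H.coe) (by rw [hcard]; exact hexp) h8 hham
    rw [hcard] at this
    rw [hb, Set.ncard_image_of_injective _ (Sym2.map.injective Subtype.val_injective)]
    refine le_trans ?_ this
    nlinarith
  · rw [hb, Set.disjoint_left]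
    rintro _ ⟨e, he, rfl⟩ h
    exact hno ⟨e, he, h⟩

theorem exponent_tendsto :
    Filter.Tendsto (fun n : ℕ => Real.exp ((n : ℝ) * (Real.log 2 - Real.log n / 12800)))
      Filter.atTop (nhds 0) := by
  refine Real.tendsto_exp_atBot.comp ?_
  refine Filter.Tendsto.atTop_mul_atBot₀ tendsto_natCast_atTop_atTop ?_
  have h1 : Filter.Tendsto (fun n : ℕ => Real.log n / 12800) Filter.atTop Filter.atTop :=
    (Real.tendsto_log_atTop.comp tendsto_natCast_atTop_atTop).atTop_div_const (by norm_num)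
  simpa [sub_eq_add_neg] using
    Filter.tendsto_atBot_add_const_left _ (Real.log 2) (Filter.tendsto_neg_atTop_atBot.comp h1)

theorem gnpProb_le_one {p : ℝ} (h0 : 0 ≤ p) (h1 : p ≤ 1) (P : SimpleGraph (Fin n) → Prop) :
    gnpProb n p P ≤ 1 := by
  classical
  rw [← sum_wt (n := n) p]
  unfold gnpProb
  refine Finset.sum_le_sum fun G _ => ?_
  have := wt_nonneg h0 h1 G
  split_ifs
  · exact le_rfl
  · exact this

end GnpAux

/-- **Lemma (random graphs hit boosters of sparse expanders).**
There is an absolute constant `c > 0` such that: if `p(n)` satisfies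
`n·p(n) − log n − log log n → ∞` and `n·p(n) − log n − log log n = o(log log n)`,
then whp `G ~ G(n, p(n))` is such that for every `W ⊆ V(G)` with `|W| ≥ 0.1n` and
every non-Hamiltonian subgraph `H` of `G` on vertex set `W` which is a
`(|W|/4, 2)`-expander with at most `c·n·log n` edges, some booster of `H` is an
edge of `G`. -/
theorem gnp_hits_boosters :
    ∃ c : ℝ, 0 < c ∧
      ∀ p : ℕ → ℝ, (∀ n, 0 ≤ p n ∧ p n ≤ 1) →
      Filter.Tendsto
        (fun n : ℕ => n * p n - Real.log n - Real.log (Real.log n))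
        Filter.atTop Filter.atTop →
      (fun n : ℕ => n * p n - Real.log n - Real.log (Real.log n))
        =o[Filter.atTop] (fun n : ℕ => Real.log (Real.log n)) →
      Filter.Tendsto
        (fun n : ℕ => gnpProb n (p n) (fun G =>
          ∀ W : Finset (Fin n), (0.1 : ℝ) * n ≤ (W.card : ℝ) →
          ∀ H : G.Subgraph, H.verts = ↑W →
            IsExpander H.coe ((W.card : ℝ) / 4) 2 →
            (H.coe.edgeSet.ncard : ℝ) ≤ c * n * Real.log n →
            (¬∃ (a : H.verts) (w : H.coe.Walk a a), w.IsHamiltonianCycle) →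
            ∃ e : Sym2 H.verts, IsBooster H.coe e ∧ e.map Subtype.val ∈ G.edgeSet))
        Filter.atTop (nhds 1) := by
  have hlogK : 0 < Real.log 3200 := Real.log_pos (by norm_num)
  refine ⟨1 / (12800 * Real.log 3200), by positivity, fun p hp hinf _ => ?_⟩
  have hz := GnpAux.exponent_tendsto
  have hlow : Filter.Tendsto
      (fun n : ℕ => 1 - Real.exp ((n : ℝ) * (Real.log 2 - Real.log n / 12800)))
      Filter.atTop (nhds 1) := by
    simpa using hz.const_sub 1
  refine tendsto_of_tendsto_of_tendsto_of_le_of_le' hlow tendsto_const_nhds ?_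
    (Filter.Eventually.of_forall fun n => GnpAux.gnpProb_le_one (hp n).1 (hp n).2 _)
  filter_upwards [hinf.eventually_ge_atTop 0, Filter.eventually_ge_atTop 80] with n hn1 hn2
  refine le_trans ?_ (GnpAux.bad_le (hp n).1 (hp n).2 _
    (1 / (12800 * Real.log 3200) * n * Real.log n) ((n : ℝ) ^ 2 / 3200) ?_)
  · have hn80 : (80 : ℝ) ≤ n := by exact_mod_cast hn2
    have hlog1 : 1 ≤ Real.log n := by
      rw [Real.le_log_iff_exp_le (by linarith)]
      linarith [Real.exp_one_lt_d9]
    have hll : 0 ≤ Real.log (Real.log n) := Real.log_nonneg hlog1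
    have hnp : Real.log n ≤ n * p n := by linarith
    apply sub_le_sub_left
    have e2 : (2 : ℝ) ^ n = Real.exp (n * Real.log 2) := by
      rw [Real.exp_nat_mul, Real.exp_log (by norm_num)]
    rw [Real.rpow_def_of_pos (by norm_num), e2, ← Real.exp_add, ← Real.exp_add, ← Real.exp_add]
    apply Real.exp_le_exp.2
    have e3 : Real.log 3200 * (1 / (12800 * Real.log 3200) * n * Real.log n) =
        n * Real.log n / 12800 := by field_simp
    rw [e3]
    nlinarith [mul_le_mul_of_nonneg_left hnp (by linarith : (0 : ℝ) ≤ n)]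
  · intro G hG
    push Not at hG
    obtain ⟨W, hW, H, hHW, hexp, hM, hham, hno⟩ := hG
    refine GnpAux.event_aux hn2 G W hW H hHW hexp hM ?_ ?_
    · rintro ⟨a, w, hw⟩
      exact hham a w hw
    · rintro ⟨e, he, he'⟩
      exact hno e he he'
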